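/- Let V be an automorphism of the Kähler structure of the Kähler base (i.e. L_V J = 0 and L_V g = 0, hence also L_V ω = 0). Then there is a locally defined function f on the Sasakian lift with df(ξ) = 0 (namely f = −2H∘π₂, where H is a local Hamiltonian of V: ω(V, ·) = dH), such that the vector field U_V = V^L + fξ is a local infinitesimal automorphism of the almost contact metric structure of the Sasakian lift: L_{U_V} φ = 0 and L_{U_V} g^L = 0. -/

import Mathlib

/-!
Abstract framework for (local) differential geometry, following the standard
algebraic formulation: smooth functions form a commutative `ℝ`-algebra `F`,
vector fields form an `F`-module `V` equipped with a Lie bracket and a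
directional derivative (derivation) action on functions.  Metrics, connections,
curvature, Ricci tensors (via orthonormal frames), Lie derivatives, exterior
derivatives, almost contact metric / Sasakian structures, Kähler structures,
`D_{α,β}`-homotheties, twisted `η`-Ricci solitons, and the Sasakian lift of a
Kähler base are all expressed in this language.
-/

/-- The calculus of vector fields on a manifold: a Lie bracket and a
directional-derivative action of vector fields on functions, with the usual
rules. -/
structure VectorCalculus (F : Type*) (V : Type*) [CommRing F] [Algebra ℝ F]
    [AddCommGroup V] [Module F V] where
  bracket : V → V → V
  deriv : V → F → F
  bracket_antisymm : ∀ X Y, bracket X Y = - bracket Y X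
  bracket_add_left : ∀ X Y Z, bracket (X + Y) Z = bracket X Z + bracket Y Z
  bracket_smul_left : ∀ (f : F) (X Y : V),
      bracket (f • X) Y = f • bracket X Y - deriv Y f • X
  jacobi : ∀ X Y Z,
      bracket X (bracket Y Z) + bracket Y (bracket Z X) + bracket Z (bracket X Y) = 0
  deriv_add : ∀ (X : V) (f g : F), deriv X (f + g) = deriv X f + deriv X g
  deriv_mul : ∀ (X : V) (f g : F), deriv X (f * g) = deriv X f * g + f * deriv X g
  deriv_add_left : ∀ (X Y : V) (f : F), deriv (X + Y) f = deriv X f + deriv Y f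
  deriv_smul_left : ∀ (f : F) (X : V) (h : F), deriv (f • X) h = f * deriv X h
  deriv_const : ∀ (X : V) (r : ℝ), deriv X (algebraMap ℝ F r) = 0
  deriv_bracket : ∀ (X Y : V) (f : F),
      deriv (bracket X Y) f = deriv X (deriv Y f) - deriv Y (deriv X f)

section Defs

variable {F : Type*} {V : Type*} [CommRing F] [Algebra ℝ F]
  [AddCommGroup V] [Module F V]

/-- A (pseudo-)Riemannian metric: a symmetric `F`-bilinear form on vector fields. -/
structure IsMetric (g : V → V → F) : Prop where
  symm : ∀ X Y, g X Y = g Y X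
  add_left : ∀ X Y Z, g (X + Y) Z = g X Z + g Y Z
  smul_left : ∀ (f : F) (X Y : V), g (f • X) Y = f * g X Y

/-- `nabla` is the Levi-Civita connection of the metric `g`: an affine,
torsion-free, metric-compatible connection. -/
structure IsLeviCivita (C : VectorCalculus F V) (g : V → V → F)
    (nabla : V → V → V) : Prop where
  add_left : ∀ X Y Z, nabla (X + Y) Z = nabla X Z + nabla Y Z
  smul_left : ∀ (f : F) (X Y : V), nabla (f • X) Y = f • nabla X Y
  add_right : ∀ X Y Z, nabla X (Y + Z) = nabla X Y + nabla X Z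
  leibniz : ∀ (X : V) (f : F) (Y : V),
      nabla X (f • Y) = C.deriv X f • Y + f • nabla X Y
  torsion_free : ∀ X Y, nabla X Y - nabla Y X = C.bracket X Y
  compat : ∀ X Y Z, C.deriv X (g Y Z) = g (nabla X Y) Z + g Y (nabla X Z)

/-- Riemann curvature operator `R_{X Y} Z = ∇_X ∇_Y Z - ∇_Y ∇_X Z - ∇_{[X,Y]} Z`. -/
def curv (C : VectorCalculus F V) (nabla : V → V → V) (X Y Z : V) : V :=
  nabla X (nabla Y Z) - nabla Y (nabla X Z) - nabla (C.bracket X Y) Z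

/-- An orthonormal spanning frame for the metric `g`. -/
def IsOrthFrame (g : V → V → F) {m : ℕ} (E : Fin m → V) : Prop :=
  (∀ i j, g (E i) (E j) = if i = j then (1 : F) else 0) ∧
  (∀ X : V, X = ∑ i, g X (E i) • E i)

/-- Ricci tensor, computed as the trace of the curvature in the orthonormal
frame `E`:  `Ric(Y,Z) = ∑ᵢ g(R_{Eᵢ Y} Z, Eᵢ)`. -/
def ricci (C : VectorCalculus F V) (nabla : V → V → V) {m : ℕ} (E : Fin m → V)
    (g : V → V → F) (Y Z : V) : F :=
  ∑ i, g (curv C nabla (E i) Y Z) (E i)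

/-- Scalar curvature: trace of the Ricci tensor in the frame `E`. -/
def scalarCurv (C : VectorCalculus F V) (nabla : V → V → V) {m : ℕ}
    (E : Fin m → V) (g : V → V → F) : F :=
  ∑ i, ricci C nabla E g (E i) (E i)

/-- Lie derivative of a metric (symmetric 2-tensor):
`(L_X g)(Y,Z) = X g(Y,Z) - g([X,Y],Z) - g(Y,[X,Z])`. -/
def lieDerivMetric (C : VectorCalculus F V) (X : V) (g : V → V → F) (Y Z : V) : F :=
  C.deriv X (g Y Z) - g (C.bracket X Y) Z - g Y (C.bracket X Z)

/-- Lie derivative of a 1-form: `(L_X η)(Y) = X η(Y) - η([X,Y])`. -/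
def lieDerivOneForm (C : VectorCalculus F V) (X : V) (eta : V → F) (Y : V) : F :=
  C.deriv X (eta Y) - eta (C.bracket X Y)

/-- Lie derivative of a (1,1)-tensor field: `(L_X φ)(Y) = [X, φY] - φ[X,Y]`. -/
def lieDerivEndo (C : VectorCalculus F V) (X : V) (phi : V → V) (Y : V) : V :=
  C.bracket X (phi Y) - phi (C.bracket X Y)

/-- Lie derivative of a 2-form. -/
def lieDerivTwoForm (C : VectorCalculus F V) (X : V) (Th : V → V → F) (Y Z : V) : F :=
  C.deriv X (Th Y Z) - Th (C.bracket X Y) Z - Th Y (C.bracket X Z)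

/-- Exterior derivative of a 1-form (Blair's convention, with the factor `1/2`):
`dη(X,Y) = (1/2)(X η(Y) - Y η(X) - η([X,Y]))`. -/
noncomputable def extDerivOneForm (C : VectorCalculus F V) (eta : V → F) (X Y : V) : F :=
  (1/2 : ℝ) • (C.deriv X (eta Y) - C.deriv Y (eta X) - eta (C.bracket X Y))

/-- A 1-form is closed iff `X a(Y) - Y a(X) - a([X,Y]) = 0` for all `X, Y`. -/
def IsClosedOneForm (C : VectorCalculus F V) (a : V → F) : Prop :=
  ∀ X Y, C.deriv X (a Y) - C.deriv Y (a X) - a (C.bracket X Y) = 0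

/-- A 2-form is closed iff its exterior derivative vanishes. -/
def IsClosedTwoForm (C : VectorCalculus F V) (Th : V → V → F) : Prop :=
  ∀ X Y Z,
    C.deriv X (Th Y Z) - C.deriv Y (Th X Z) + C.deriv Z (Th X Y)
      - Th (C.bracket X Y) Z + Th (C.bracket X Z) Y - Th (C.bracket Y Z) X = 0

/-- Nijenhuis torsion of a (1,1)-tensor field `S`:
`N_S(X,Y) = S²[X,Y] + [SX,SY] - S([SX,Y]) - S([X,SY])`. -/
def nijenhuis (C : VectorCalculus F V) (S : V → V) (X Y : V) : V :=
  S (S (C.bracket X Y)) + C.bracket (S X) (S Y)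
    - S (C.bracket (S X) Y) - S (C.bracket X (S Y))

/-- An almost contact metric structure `(φ, ξ, η, g)`. -/
structure IsAlmostContactMetric (phi : V → V) (xi : V) (eta : V → F)
    (g : V → V → F) : Prop where
  metric : IsMetric g
  phi_add : ∀ X Y, phi (X + Y) = phi X + phi Y
  phi_smul : ∀ (f : F) (X : V), phi (f • X) = f • phi X
  eta_add : ∀ X Y, eta (X + Y) = eta X + eta Y
  eta_smul : ∀ (f : F) (X : V), eta (f • X) = f * eta X
  phi_sq : ∀ X, phi (phi X) = -X + eta X • xi
  eta_xi : eta xi = 1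
  compat : ∀ X Y, g (phi X) (phi Y) = g X Y - eta X * eta Y

/-- A Sasakian structure: an almost contact metric structure whose Levi-Civita
connection `nabla` satisfies `(∇_X φ)Y = g(X,Y) ξ - η(Y) X`. -/
def IsSasakianWith (C : VectorCalculus F V) (phi : V → V) (xi : V) (eta : V → F)
    (g : V → V → F) (nabla : V → V → V) : Prop :=
  IsAlmostContactMetric phi xi eta g ∧ IsLeviCivita C g nabla ∧
    ∀ X Y, nabla X (phi Y) - phi (nabla X Y) = g X Y • xi - eta Y • X

/-- Symmetric tensor product of two 1-forms:
`(a ⊙ b)(Y,Z) = (1/2)(a(Y) b(Z) + a(Z) b(Y))`. -/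
noncomputable def symProd (a b : V → F) (Y Z : V) : F := (1/2 : ℝ) • (a Y * b Z + a Z * b Y)

/-- Twisted `η`-Ricci soliton with data `(X, λ, C₁, C₂)`:
`η(X) = 0` and `Ric + (1/2) L_X g = λ g + 2 C₁ (L_X η) ⊙ η + C₂ η ⊗ η`. -/
def IsTwistedEtaRicciSoliton (C : VectorCalculus F V) (g : V → V → F)
    (eta : V → F) (Ric : V → V → F) (X : V) (lam C1 C2 : ℝ) : Prop :=
  eta X = 0 ∧
  ∀ Y Z, Ric Y Z + (1/2 : ℝ) • lieDerivMetric C X g Y Z =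
    lam • g Y Z + (2 * C1) • symProd (lieDerivOneForm C X eta) eta Y Z
      + C2 • (eta Y * eta Z)

/-- A Kähler structure `(J, g)` with Levi-Civita connection `nabla`. -/
structure IsKaehler (C : VectorCalculus F V) (J : V → V) (g : V → V → F)
    (nabla : V → V → V) : Prop where
  metric : IsMetric g
  lc : IsLeviCivita C g nabla
  J_add : ∀ X Y, J (X + Y) = J X + J Y
  J_smul : ∀ (f : F) (X : V), J (f • X) = f • J X
  J_sq : ∀ X, J (J X) = -X
  hermitian : ∀ X Y, g (J X) (J Y) = g X Y
  parallel : ∀ X Y, nabla X (J Y) = J (nabla X Y)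

/-- The metric of the `D_{α,β}`-homothety: `g' = α g + (β² - α) η ⊗ η`. -/
def dHomMetric (g : V → V → F) (eta : V → F) (α β : ℝ) (X Y : V) : F :=
  α • g X Y + (β ^ 2 - α) • (eta X * eta Y)

/-- The 1-form of the `D_{α,β}`-homothety: `η' = β η`. -/
def dHomEta (eta : V → F) (β : ℝ) (X : V) : F := β • eta X

end Defs

section DefsR

variable {F : Type*} {V : Type*} [CommRing F] [Algebra ℝ F]
  [AddCommGroup V] [Module F V] [Module ℝ V] [IsScalarTower ℝ F V]

/-- The Reeb field of the `D_{α,β}`-homothety: `ξ' = (1/β) ξ`. -/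
noncomputable def dHomXi (xi : V) (β : ℝ) : V := β⁻¹ • xi

/-- A `c`-Sasakian structure (`c` a real constant): an almost contact metric
structure whose Levi-Civita connection satisfies
`(∇_X φ)Y = c (g(X,Y) ξ - η(Y) X)`. -/
def IsCSasakianWith (C : VectorCalculus F V) (phi : V → V) (xi : V)
    (eta : V → F) (g : V → V → F) (nabla : V → V → V) (c : ℝ) : Prop :=
  IsAlmostContactMetric phi xi eta g ∧ IsLeviCivita C g nabla ∧
    ∀ X Y, nabla X (phi Y) - phi (nabla X Y) = c • (g X Y • xi - eta Y • X)

end DefsR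

/-- The Sasakian lift of a Kähler base `(N, J, g)` to `M = ℝ × N`, presented
axiomatically:  `liftF` is the pullback of functions along `π₂`, `liftV` is the
lift of vector fields `X ↦ X^L = X - (τ(X)∘π₂) ξ`, `ξ = ∂_t`, `η = dt + π₂*τ`,
`φ X^L = (JX)^L`, `φ ξ = 0`, `g^L = η ⊗ η + π₂* g`.  The structure fields
record exactly the identities satisfied by this construction. -/
structure SasakianLiftData
    {Fb : Type*} {Vb : Type*} [CommRing Fb] [Algebra ℝ Fb]
    [AddCommGroup Vb] [Module Fb Vb]
    {Fm : Type*} {Vm : Type*} [CommRing Fm] [Algebra ℝ Fm]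
    [AddCommGroup Vm] [Module Fm Vm]
    (Cb : VectorCalculus Fb Vb) (Cm : VectorCalculus Fm Vm)
    (J : Vb → Vb) (gb : Vb → Vb → Fb) where
  liftF : Fb →ₐ[ℝ] Fm
  liftV : Vb → Vm
  xi : Vm
  eta : Vm → Fm
  phi : Vm → Vm
  gL : Vm → Vm → Fm
  liftV_add : ∀ X Y, liftV (X + Y) = liftV X + liftV Y
  liftV_smul : ∀ (f : Fb) (X : Vb), liftV (f • X) = liftF f • liftV X
  eta_add : ∀ W W', eta (W + W') = eta W + eta W'
  eta_smul : ∀ (f : Fm) (W : Vm), eta (f • W) = f * eta W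
  phi_add : ∀ W W', phi (W + W') = phi W + phi W'
  phi_smul : ∀ (f : Fm) (W : Vm), phi (f • W) = f • phi W
  gL_metric : IsMetric gL
  eta_xi : eta xi = 1
  eta_lift : ∀ X, eta (liftV X) = 0
  phi_lift : ∀ X, phi (liftV X) = liftV (J X)
  phi_xi : phi xi = 0
  gL_lift : ∀ X Y, gL (liftV X) (liftV Y) = liftF (gb X Y)
  gL_xi : ∀ W, gL xi W = eta W
  bracket_lift : ∀ X Y, Cm.bracket (liftV X) (liftV Y)
      = liftV (Cb.bracket X Y) - ((2 : Fm) * liftF (gb X (J Y))) • xi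
  bracket_xi_lift : ∀ X, Cm.bracket xi (liftV X) = 0
  deriv_lift : ∀ (X : Vb) (f : Fb),
      Cm.deriv (liftV X) (liftF f) = liftF (Cb.deriv X f)
  deriv_xi : ∀ f : Fb, Cm.deriv xi (liftF f) = 0
  spanning : ∀ W : Vm, ∃ (k : ℕ) (a : Fin k → Fm) (X : Fin k → Vb),
      W = eta W • xi + ∑ i, a i • liftV (X i)

/-!
Every vector field on the lift is a combination of `ξ` and the lifts `X^L`, and the Lie derivatives
of `φ`, `η` and `g^L` are tensors, so it is enough to evaluate them on these generators.  For
`U = V^L + (h ∘ π₂) ξ` one has `[U, ξ] = 0` and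
`[U, X^L] = [V, X]^L - ((2 ω(V, X) + X h) ∘ π₂) ξ`.  With `h = -2H` the Hamiltonian equation
`ω(V, ·) = dH` cancels the `ξ`-component, so `U` acts on the lifts exactly as `V` acts on the base,
and `L_V J = 0`, `L_V g = 0` pass to `L_U φ = 0`, `L_U g^L = 0`.
-/

namespace VectorCalculus

variable {F V : Type*} [CommRing F] [Algebra ℝ F] [AddCommGroup V] [Module F V]
  (C : VectorCalculus F V)

/-- The directional derivative along `X`, bundled as an `ℝ`-derivation of the algebra of
functions. -/
def derivation (X : V) : Derivation ℝ F F :=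
  Derivation.mk'
    { toFun := C.deriv X
      map_add' := C.deriv_add X
      map_smul' := fun r f => by
        simp only [Algebra.smul_def, C.deriv_mul, C.deriv_const, zero_mul, zero_add,
          RingHom.id_apply] }
    fun f g => by
      simp only [LinearMap.coe_mk, AddHom.coe_mk, C.deriv_mul, smul_eq_mul]
      ring

theorem deriv_zero (X : V) : C.deriv X 0 = 0 :=
  map_zero (C.derivation X)

theorem deriv_one (X : V) : C.deriv X 1 = 0 :=
  (C.derivation X).map_one_eq_zero

theorem deriv_neg (X : V) (f : F) : C.deriv X (-f) = -C.deriv X f :=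
  map_neg (C.derivation X) f

theorem bracket_add_right (X Y Z : V) :
    C.bracket X (Y + Z) = C.bracket X Y + C.bracket X Z := by
  rw [C.bracket_antisymm X (Y + Z), C.bracket_add_left, C.bracket_antisymm X Y,
    C.bracket_antisymm X Z, neg_add]

theorem bracket_smul_right (f : F) (X Y : V) :
    C.bracket X (f • Y) = f • C.bracket X Y + C.deriv X f • Y := by
  rw [C.bracket_antisymm X (f • Y), C.bracket_smul_left, C.bracket_antisymm X Y]
  module

theorem bracket_zero_right (X : V) : C.bracket X 0 = 0 := by
  simpa only [add_zero, left_eq_add] using C.bracket_add_right X 0 0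

theorem bracket_self (X : V) : C.bracket X X = 0 := by
  let : Module ℚ V := Module.compHom V ((algebraMap ℝ F).comp (algebraMap ℚ ℝ))
  have : IsAddTorsionFree V := .of_module_rat V
  exact self_eq_neg.mp (C.bracket_antisymm X X)

/-- The Lie derivative of a 1-form, bundled as an `F`-linear map. -/
def lieDerivDual (X : V) (α : Module.Dual F V) : Module.Dual F V where
  toFun := lieDerivOneForm C X α
  map_add' Y Z := by
    simp only [lieDerivOneForm, C.bracket_add_right, C.deriv_add, map_add]
    ring
  map_smul' f Y := by
    simp only [lieDerivOneForm, C.bracket_smul_right, C.deriv_mul, map_add, map_smul, smul_eq_mul,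
      RingHom.id_apply]
    ring

/-- The Lie derivative of a (1,1)-tensor field, bundled as an `F`-linear map. -/
def lieDerivEnd (X : V) (φ : Module.End F V) : Module.End F V where
  toFun := lieDerivEndo C X φ
  map_add' Y Z := by
    simp only [lieDerivEndo, C.bracket_add_right, map_add]
    abel
  map_smul' f Y := by
    simp only [lieDerivEndo, C.bracket_smul_right, map_add, map_smul, RingHom.id_apply]
    module

theorem lieDerivMetric_symm {g : V → V → F} (hg : IsMetric g) (X Y Z : V) :
    lieDerivMetric C X g Y Z = lieDerivMetric C X g Z Y := by
  simp only [lieDerivMetric, hg.symm Y, hg.symm (C.bracket X Y)]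
  ring

theorem lieDerivMetric_add_left {g : V → V → F} (hg : IsMetric g) (X Y Y' Z : V) :
    lieDerivMetric C X g (Y + Y') Z = lieDerivMetric C X g Y Z + lieDerivMetric C X g Y' Z := by
  simp only [lieDerivMetric, C.bracket_add_right, hg.add_left, C.deriv_add]
  ring

theorem lieDerivMetric_smul_left {g : V → V → F} (hg : IsMetric g) (X : V) (f : F) (Y Z : V) :
    lieDerivMetric C X g (f • Y) Z = f * lieDerivMetric C X g Y Z := by
  simp only [lieDerivMetric, C.bracket_smul_right, hg.add_left, hg.smul_left, C.deriv_mul]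
  ring

/-- The Lie derivative of a metric, bundled as an `F`-bilinear form. -/
def lieDerivBilin {g : V → V → F} (hg : IsMetric g) (X : V) : LinearMap.BilinForm F V :=
  LinearMap.mk₂ F (lieDerivMetric C X g)
    (C.lieDerivMetric_add_left hg X)
    (C.lieDerivMetric_smul_left hg X)
    (fun Y Z Z' => by
      simp only [C.lieDerivMetric_symm hg X Y, C.lieDerivMetric_add_left hg])
    (fun f Y Z => by
      simp only [C.lieDerivMetric_symm hg X Y, C.lieDerivMetric_smul_left hg, smul_eq_mul])

end VectorCalculus

namespace SasakianLiftData

variable {Fb Vb Fm Vm : Type*} [CommRing Fb] [Algebra ℝ Fb] [AddCommGroup Vb] [Module Fb Vb]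
  [CommRing Fm] [Algebra ℝ Fm] [AddCommGroup Vm] [Module Fm Vm]
  {Cb : VectorCalculus Fb Vb} {Cm : VectorCalculus Fm Vm} {J : Vb → Vb} {gb : Vb → Vb → Fb}
  (L : SasakianLiftData Cb Cm J gb)

/-- The contact form `η`, bundled as an `Fm`-linear map. -/
def etaDual : Module.Dual Fm Vm where
  toFun := L.eta
  map_add' := L.eta_add
  map_smul' := L.eta_smul

/-- The (1,1)-tensor field `φ`, bundled as an `Fm`-linear map. -/
def phiEnd : Module.End Fm Vm where
  toFun := L.phi
  map_add' := L.phi_add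
  map_smul' := L.phi_smul

theorem eta_zero : L.eta 0 = 0 :=
  map_zero L.etaDual

theorem phi_zero : L.phi 0 = 0 :=
  map_zero L.phiEnd

theorem liftV_sub (X Y : Vb) : L.liftV (X - Y) = L.liftV X - L.liftV Y :=
  map_sub (AddMonoidHom.mk' L.liftV L.liftV_add) X Y

theorem liftV_zero : L.liftV 0 = 0 :=
  map_zero (AddMonoidHom.mk' L.liftV L.liftV_add)

theorem span_xi_liftV : Submodule.span Fm (insert L.xi (Set.range L.liftV)) = ⊤ := by
  refine Submodule.eq_top_iff'.mpr fun W => ?_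
  obtain ⟨k, a, X, hW⟩ := L.spanning W
  rw [hW]
  exact add_mem (Submodule.smul_mem _ _ (Submodule.subset_span (Set.mem_insert _ _)))
    (sum_mem fun i _ => Submodule.smul_mem _ _
      (Submodule.subset_span (Set.mem_insert_of_mem _ (Set.mem_range_self (X i)))))

theorem linearMap_ext {M : Type*} [AddCommMonoid M] [Module Fm M] {A B : Vm →ₗ[Fm] M}
    (h_xi : A L.xi = B L.xi) (h_liftV : ∀ X, A (L.liftV X) = B (L.liftV X)) : A = B :=
  LinearMap.ext_on L.span_xi_liftV
    (Set.forall_mem_insert.mpr ⟨h_xi, Set.forall_mem_range.mpr h_liftV⟩)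

/-- `U` is a strict contact lift of the base field `V`: it projects to `V`, commutes with `ξ`, and
preserves the horizontal lifts, on which it acts as `V` acts on the base. -/
structure IsStrictContactLift (U : Vm) (V : Vb) : Prop where
  deriv_liftF : ∀ f : Fb, Cm.deriv U (L.liftF f) = L.liftF (Cb.deriv V f)
  bracket_xi : Cm.bracket U L.xi = 0
  bracket_liftV : ∀ X : Vb, Cm.bracket U (L.liftV X) = L.liftV (Cb.bracket V X)

theorem bracket_liftV_add_smul_xi_liftV (V X : Vb) (h : Fb) :
    Cm.bracket (L.liftV V + L.liftF h • L.xi) (L.liftV X)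
      = L.liftV (Cb.bracket V X) - L.liftF (2 * gb V (J X) + Cb.deriv X h) • L.xi := by
  rw [Cm.bracket_add_left, Cm.bracket_smul_left, L.bracket_lift, L.bracket_xi_lift, L.deriv_lift,
    map_add, map_mul, map_ofNat]
  module

theorem isStrictContactLift_liftV_add_smul_xi {V : Vb} {h : Fb}
    (hh : ∀ X, Cb.deriv X h = -(2 * gb V (J X))) :
    L.IsStrictContactLift (L.liftV V + L.liftF h • L.xi) V where
  deriv_liftF f := by
    rw [Cm.deriv_add_left, Cm.deriv_smul_left, L.deriv_lift, L.deriv_xi, mul_zero, add_zero]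
  bracket_xi := by
    rw [Cm.bracket_add_left, Cm.bracket_smul_left, Cm.bracket_antisymm, L.bracket_xi_lift,
      Cm.bracket_self, L.deriv_xi, smul_zero, zero_smul, neg_zero, sub_zero, add_zero]
  bracket_liftV X := by
    rw [L.bracket_liftV_add_smul_xi_liftV, hh, add_neg_cancel, map_zero, zero_smul, sub_zero]

namespace IsStrictContactLift

variable {L} {U : Vm} {V : Vb}

theorem lieDerivEndo_phi_xi (hU : L.IsStrictContactLift U V) :
    lieDerivEndo Cm U L.phi L.xi = 0 := by
  rw [lieDerivEndo, L.phi_xi, hU.bracket_xi, L.phi_zero, Cm.bracket_zero_right, sub_zero]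

theorem lieDerivEndo_phi_liftV (hU : L.IsStrictContactLift U V) (X : Vb) :
    lieDerivEndo Cm U L.phi (L.liftV X) = L.liftV (lieDerivEndo Cb V J X) := by
  simp only [lieDerivEndo, L.phi_lift, hU.bracket_liftV, L.liftV_sub]

theorem lieDerivEndo_phi_eq_zero (hU : L.IsStrictContactLift U V)
    (hJ : ∀ X, lieDerivEndo Cb V J X = 0) (W : Vm) :
    lieDerivEndo Cm U L.phi W = 0 := by
  have h_tensor : Cm.lieDerivEnd U L.phiEnd = 0 :=
    L.linearMap_ext hU.lieDerivEndo_phi_xi fun X =>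
      (hU.lieDerivEndo_phi_liftV X).trans (by rw [hJ, L.liftV_zero, LinearMap.zero_apply])
  exact LinearMap.congr_fun h_tensor W

theorem lieDerivOneForm_eta_xi (hU : L.IsStrictContactLift U V) :
    lieDerivOneForm Cm U L.eta L.xi = 0 := by
  rw [lieDerivOneForm, L.eta_xi, hU.bracket_xi, L.eta_zero, Cm.deriv_one, sub_zero]

theorem lieDerivOneForm_eta_liftV (hU : L.IsStrictContactLift U V) (X : Vb) :
    lieDerivOneForm Cm U L.eta (L.liftV X) = 0 := by
  rw [lieDerivOneForm, L.eta_lift, hU.bracket_liftV, L.eta_lift, Cm.deriv_zero, sub_zero]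

theorem lieDerivOneForm_eta_eq_zero (hU : L.IsStrictContactLift U V) (W : Vm) :
    lieDerivOneForm Cm U L.eta W = 0 := by
  have h_tensor : Cm.lieDerivDual U L.etaDual = 0 :=
    L.linearMap_ext hU.lieDerivOneForm_eta_xi hU.lieDerivOneForm_eta_liftV
  exact LinearMap.congr_fun h_tensor W

theorem lieDerivMetric_xi_left (hU : L.IsStrictContactLift U V) (W : Vm) :
    lieDerivMetric Cm U L.gL L.xi W = 0 := by
  have h_zero_left : L.gL 0 W = 0 := by
    simpa only [zero_smul, zero_mul] using L.gL_metric.smul_left 0 0 W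
  simpa only [lieDerivMetric, lieDerivOneForm, L.gL_xi, hU.bracket_xi, h_zero_left, sub_zero]
    using hU.lieDerivOneForm_eta_eq_zero W

theorem lieDerivMetric_liftV_liftV (hU : L.IsStrictContactLift U V) (X Y : Vb) :
    lieDerivMetric Cm U L.gL (L.liftV X) (L.liftV Y) = L.liftF (lieDerivMetric Cb V gb X Y) := by
  simp only [lieDerivMetric, hU.bracket_liftV, L.gL_lift, hU.deriv_liftF, map_sub]

theorem lieDerivMetric_eq_zero (hU : L.IsStrictContactLift U V)
    (hg : ∀ X Y, lieDerivMetric Cb V gb X Y = 0) (W W' : Vm) :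
    lieDerivMetric Cm U L.gL W W' = 0 := by
  have h_tensor : Cm.lieDerivBilin L.gL_metric U = 0 := by
    refine L.linearMap_ext (LinearMap.ext hU.lieDerivMetric_xi_left) fun X =>
      L.linearMap_ext ?_ fun Y => ?_
    · exact (Cm.lieDerivMetric_symm L.gL_metric U _ _).trans (hU.lieDerivMetric_xi_left _)
    · exact (hU.lieDerivMetric_liftV_liftV X Y).trans (by rw [hg, map_zero]; rfl)
  exact LinearMap.congr_fun₂ h_tensor W W'

end IsStrictContactLift

end SasakianLiftData

theorem lift_of_kaehler_automorphism_general
    {Fb Vb Fm Vm : Type*} [CommRing Fb] [Algebra ℝ Fb]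
    [AddCommGroup Vb] [Module Fb Vb]
    [CommRing Fm] [Algebra ℝ Fm] [AddCommGroup Vm] [Module Fm Vm]
    (Cb : VectorCalculus Fb Vb) (Cm : VectorCalculus Fm Vm)
    (J : Vb → Vb) (gb : Vb → Vb → Fb)
    (L : SasakianLiftData Cb Cm J gb)
    (Vf : Vb) (H : Fb)
    (hVJ : ∀ X : Vb, Cb.bracket Vf (J X) = J (Cb.bracket Vf X))
    (hVg : ∀ X Y : Vb, lieDerivMetric Cb Vf gb X Y = 0)
    (hH : ∀ Y : Vb, gb Vf (J Y) = Cb.deriv Y H) :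
    ∃ f : Fm, Cm.deriv L.xi f = 0 ∧ f = -((2 : Fm) * L.liftF H) ∧
      (∀ W : Vm, lieDerivEndo Cm (L.liftV Vf + f • L.xi) L.phi W = 0) ∧
      (∀ W W' : Vm, lieDerivMetric Cm (L.liftV Vf + f • L.xi) L.gL W W' = 0) := by
  have h_deriv (X : Vb) : Cb.deriv X (-(2 * H)) = -(2 * gb Vf (J X)) := by
    rw [Cb.deriv_neg, two_mul, Cb.deriv_add, hH, two_mul]
  have hU := L.isStrictContactLift_liftV_add_smul_xi h_deriv
  refine ⟨L.liftF (-(2 * H)), L.deriv_xi _, ?_, ?_, ?_⟩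
  · rw [map_neg, map_mul, map_ofNat]
  · exact hU.lieDerivEndo_phi_eq_zero fun X => sub_eq_zero.mpr (hVJ X)
  · exact hU.lieDerivMetric_eq_zero hVg

/-- If `V` is an automorphism of the Kähler structure
(`L_V J = 0`, `L_V g = 0`) with local Hamiltonian `H` (`ω(V,·) = dH`), then
there is a function `f` on the Sasakian lift with `ξ f = 0` — namely
`f = -2 H∘π₂` — such that `U_V = V^L + f ξ` is an infinitesimal automorphism of
the almost contact metric structure: `L_{U_V} φ = 0` and `L_{U_V} g^L = 0`. -/
theorem lift_of_kaehler_automorphism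
    {Fb Vb Fm Vm : Type*} [CommRing Fb] [Algebra ℝ Fb]
    [AddCommGroup Vb] [Module Fb Vb]
    [CommRing Fm] [Algebra ℝ Fm] [AddCommGroup Vm] [Module Fm Vm]
    (Cb : VectorCalculus Fb Vb) (Cm : VectorCalculus Fm Vm)
    (J : Vb → Vb) (gb : Vb → Vb → Fb) (nablab : Vb → Vb → Vb)
    (hK : IsKaehler Cb J gb nablab)
    (L : SasakianLiftData Cb Cm J gb)
    (Vf : Vb) (H : Fb)
    (hVJ : ∀ X : Vb, Cb.bracket Vf (J X) = J (Cb.bracket Vf X))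
    (hVg : ∀ X Y : Vb, lieDerivMetric Cb Vf gb X Y = 0)
    (hH : ∀ Y : Vb, gb Vf (J Y) = Cb.deriv Y H) :
    ∃ f : Fm, Cm.deriv L.xi f = 0 ∧ f = -((2 : Fm) * L.liftF H) ∧
      (∀ W : Vm, lieDerivEndo Cm (L.liftV Vf + f • L.xi) L.phi W = 0) ∧
      (∀ W W' : Vm, lieDerivMetric Cm (L.liftV Vf + f • L.xi) L.gL W W' = 0) :=
  lift_of_kaehler_automorphism_general Cb Cm J gb L Vf H hVJ hVg hH
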